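/- (Claim G.3.) Let K ≥ 2, let Q ∈ ℝ^K satisfy Q_1 > Q_2 ≥ … ≥ Q_K, and fix j ∈ {2,…,K}. Then inf { S(Q,P) : P has unique maximizer j, P_j ≥ Q_j, and P_i ≤ Q_i for all i ≠ j } = inf { S(Q,P) : P has unique maximizer j, P_j ≥ Q_j, Q_i − (P_j − Q_j) ≤ P_i ≤ Q_i for all i < j, and P_i ≤ Q_i for all i > j }. -/

import Mathlib

/-!
The second feasible set is contained in the first, so it suffices to turn every `P` feasible for
the first set into a `P'` feasible for the second with `S(Q,P') ≤ S(Q,P)`.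

Write `a = P_j - Q_j ≥ 0` and `e_i = Q_i - P_i ≥ 0` for `i ≠ j`, and let `i₀` maximize `e_i` over
`i < j`, with `m = e_{i₀}`. If `m ≤ a`, then `P' = P` works. Otherwise exchange the displacements of
`i₀` and `j`: put `P'_j = Q_j + m` and `P'_{i₀} = Q_{i₀} - a`, and keep all other coordinates. The
gap `P_j - P_{i₀}` is unchanged and the other gaps to `j` grow, so `H₁` does not increase
(`H1_le`). The weighted distance changes by `(m² - a²)(1/D_j - 1/D_{i₀}) ≤ 0`, since `i ↦ D_i(Q)`
is positive and monotone along the decreasing order of `Q` (`Dfun_pos`, `Dfun_le`). Monotonicity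
comes from `D_i + 1 = Σ_l (2Δ_i / (Δ_l + Δ_i))²`, where every summand increases with `Δ_i`.
-/


open Finset

/-- The largest entry of `Q` (the index set `Fin K` is nonempty in all statements below). -/
noncomputable def Qmax {K : ℕ} (Q : Fin K → ℝ) : ℝ := ⨆ j, Q j

/-- Index `i` is a maximizer of the vector `Q`. -/
def isMax {K : ℕ} (Q : Fin K → ℝ) (i : Fin K) : Prop := ∀ j, Q j ≤ Q i

/-- Index `i` is the unique maximizer of the vector `P`. -/
def uniqueMax {K : ℕ} (P : Fin K → ℝ) (i : Fin K) : Prop :=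
  isMax P i ∧ ∀ j, isMax P j → j = i

/-- The gap `Δ_i^Q = Q* - Q_i`. -/
noncomputable def gapQ {K : ℕ} (Q : Fin K → ℝ) (i : Fin K) : ℝ := Qmax Q - Q i

/-- `D_i(Q)` for a non-maximizing index `i`:
`(2Δ_i^Q)² · Σ_{j≠i} (Δ_j^Q + Δ_i^Q)⁻²`. -/
noncomputable def Dbase {K : ℕ} (Q : Fin K → ℝ) (i : Fin K) : ℝ :=
  (2 * gapQ Q i) ^ 2 * ∑ j ∈ univ.erase i, ((gapQ Q j + gapQ Q i) ^ 2)⁻¹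

open Classical in
/-- `D_i(Q)`: for a maximizer `i` it is the minimum of `D_{i'}(Q)` over non-maximizers `i'`. -/
noncomputable def Dfun {K : ℕ} (Q : Fin K → ℝ) (i : Fin K) : ℝ :=
  if isMax Q i then sInf {x : ℝ | ∃ i', ¬ isMax Q i' ∧ x = Dbase Q i'} else Dbase Q i

/-- The normalization factor `Z(Q) = Σ_i 1/D_i(Q)`. -/
noncomputable def Zfun {K : ℕ} (Q : Fin K → ℝ) : ℝ := ∑ i, (Dfun Q i)⁻¹

open Classical in
/-- The complexity `H₁(P) = Σ_{i ≠ i*(P)} ((max_j P_j) - P_i)⁻²`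
(for `P` with a unique maximizer, the non-maximizing indices are exactly those `≠ i*(P)`). -/
noncomputable def H1 {K : ℕ} (P : Fin K → ℝ) : ℝ :=
  ∑ i ∈ univ.filter (fun i => ¬ isMax P i), ((Qmax P - P i) ^ 2)⁻¹

/-- The stability functional `S(Q,P) = H₁(P) · Σ_i (Q_i - P_i)² / D_i(Q)`. -/
noncomputable def Sfun {K : ℕ} (Q P : Fin K → ℝ) : ℝ :=
  H1 P * ∑ i, (Q i - P i) ^ 2 / Dfun Q i

lemma le_Qmax {K : ℕ} (Q : Fin K → ℝ) (i : Fin K) : Q i ≤ Qmax Q :=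
  le_ciSup (Set.finite_range Q).bddAbove i

lemma gapQ_nonneg {K : ℕ} (Q : Fin K → ℝ) (i : Fin K) : 0 ≤ gapQ Q i :=
  sub_nonneg.2 (le_Qmax Q i)

lemma gapQ_pos {K : ℕ} {Q : Fin K → ℝ} {i : Fin K} (h : ¬ isMax Q i) : 0 < gapQ Q i := by
  unfold isMax at h
  push Not at h
  obtain ⟨l, hl⟩ := h
  exact sub_pos.2 (hl.trans_le (le_Qmax Q l))

/-- Including the index `i` itself in the sum defining `D_i` adds exactly `1`. -/
lemma Dbase_add_one {K : ℕ} {Q : Fin K → ℝ} {i : Fin K} (h : ¬ isMax Q i) :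
    Dbase Q i + 1 = ∑ l, (2 * gapQ Q i / (gapQ Q l + gapQ Q i)) ^ 2 := by
  have hp := gapQ_pos h
  rw [← Finset.sum_erase_add _ _ (Finset.mem_univ i), Dbase, Finset.mul_sum]
  congr 1
  · refine Finset.sum_congr rfl fun l _ => ?_
    rw [div_pow, div_eq_mul_inv]
  · rw [← two_mul, div_self (by positivity), one_pow]

lemma Dbase_le {K : ℕ} {Q : Fin K → ℝ} {i j : Fin K} (hi : ¬ isMax Q i) (hj : ¬ isMax Q j)
    (h : Q j ≤ Q i) : Dbase Q i ≤ Dbase Q j := by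
  have key : Dbase Q i + 1 ≤ Dbase Q j + 1 := by
    rw [Dbase_add_one hi, Dbase_add_one hj]
    refine Finset.sum_le_sum fun l _ => ?_
    have h1 := gapQ_pos hi
    have h2 := gapQ_pos hj
    have h3 := gapQ_nonneg Q l
    have h4 : gapQ Q i ≤ gapQ Q j := sub_le_sub_left h _
    refine pow_le_pow_left₀ (by positivity) ?_ 2
    rw [div_le_div_iff₀ (by positivity) (by positivity)]
    nlinarith
  linarith

lemma Dbase_pos {K : ℕ} (hK : 2 ≤ K) {Q : Fin K → ℝ} {i : Fin K} (h : ¬ isMax Q i) :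
    0 < Dbase Q i := by
  have hp := gapQ_pos h
  unfold Dbase
  refine mul_pos (by positivity) (Finset.sum_pos (fun l _ => ?_) ?_)
  · have := gapQ_nonneg Q l
    positivity
  · have : Nontrivial (Fin K) := Fin.nontrivial_iff_two_le.2 hK
    obtain ⟨l, hl⟩ := exists_ne i
    exact ⟨l, by simp [hl]⟩

/-- The minimum defining `D_i` at a maximizer `i` is attained; some non-maximizer has to be
given, as the infimum would otherwise run over the empty set. -/
lemma Dfun_pos {K : ℕ} (hK : 2 ≤ K) {Q : Fin K → ℝ} {j : Fin K} (hj : ¬ isMax Q j) (i : Fin K) :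
    0 < Dfun Q i := by
  unfold Dfun
  split_ifs with h
  · have hfin : {x : ℝ | ∃ i', ¬ isMax Q i' ∧ x = Dbase Q i'}.Finite := by
      refine (Set.finite_range (Dbase Q)).subset ?_
      rintro x ⟨i', -, rfl⟩
      exact ⟨i', rfl⟩
    have hne : {x : ℝ | ∃ i', ¬ isMax Q i' ∧ x = Dbase Q i'}.Nonempty := ⟨_, j, hj, rfl⟩
    obtain ⟨i', hi', he⟩ := hne.csInf_mem hfin
    rw [he]
    exact Dbase_pos hK hi'
  · exact Dbase_pos hK h

lemma Dfun_le {K : ℕ} (hK : 2 ≤ K) {Q : Fin K → ℝ} {i j : Fin K} (hj : ¬ isMax Q j)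
    (h : Q j ≤ Q i) : Dfun Q i ≤ Dfun Q j := by
  unfold Dfun
  rw [if_neg hj]
  split_ifs with hi
  · refine csInf_le ⟨0, ?_⟩ ⟨j, hj, rfl⟩
    rintro x ⟨i', hi', rfl⟩
    exact (Dbase_pos hK hi').le
  · exact Dbase_le hi hj h

lemma uniqueMax_iff {K : ℕ} (P : Fin K → ℝ) (j : Fin K) :
    uniqueMax P j ↔ ∀ i, i ≠ j → P i < P j := by
  constructor
  · rintro ⟨h1, h2⟩ i hi
    refine lt_of_le_of_ne (h1 i) fun he => hi (h2 i fun l => ?_)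
    rw [he]
    exact h1 l
  · intro h
    refine ⟨fun i => ?_, fun i hi => ?_⟩
    · rcases eq_or_ne i j with rfl | hij
      · exact le_rfl
      · exact (h i hij).le
    · by_contra hij
      exact absurd (hi j) (not_le.2 (h i hij))

lemma H1_eq {K : ℕ} {P : Fin K → ℝ} {j : Fin K} (h : uniqueMax P j) :
    H1 P = ∑ i ∈ univ.erase j, ((P j - P i) ^ 2)⁻¹ := by
  have : Nonempty (Fin K) := ⟨j⟩
  have hQ : Qmax P = P j := le_antisymm (ciSup_le h.1) (le_Qmax P j)
  unfold H1
  rw [hQ]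
  refine Finset.sum_congr ?_ fun _ _ => rfl
  ext i
  simp only [Finset.mem_filter, Finset.mem_univ, true_and, Finset.mem_erase, and_true]
  exact not_congr ⟨h.2 i, fun hi => hi ▸ h.1⟩

lemma H1_nonneg {K : ℕ} (P : Fin K → ℝ) : 0 ≤ H1 P :=
  Finset.sum_nonneg fun _ _ => by positivity

/-- `H₁` decreases when all gaps to the unique maximizer grow. -/
lemma H1_le {K : ℕ} {P P' : Fin K → ℝ} {j : Fin K} (h : uniqueMax P j) (h' : uniqueMax P' j)
    (hg : ∀ i, i ≠ j → P j - P i ≤ P' j - P' i) : H1 P' ≤ H1 P := by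
  rw [H1_eq h, H1_eq h']
  refine Finset.sum_le_sum fun i hi => ?_
  have hij := Finset.ne_of_mem_erase hi
  have hpos : 0 < P j - P i := sub_pos.2 ((uniqueMax_iff P j).1 h i hij)
  have := hg i hij
  gcongr

/-- The exchange step: every feasible point of the larger problem is dominated by a feasible
point of the smaller one. -/
lemma exists_better {K : ℕ} (hK : 2 ≤ K) {Q : Fin K → ℝ}
    (hanti : ∀ i j : Fin K, i ≤ j → Q j ≤ Q i) {j : Fin K} (hj : 0 < j.val) (hjm : ¬ isMax Q j)
    {P : Fin K → ℝ} (hP : uniqueMax P j) (hPj : Q j ≤ P j) (hPi : ∀ i, i ≠ j → P i ≤ Q i) :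
    ∃ P' : Fin K → ℝ, uniqueMax P' j ∧ Q j ≤ P' j ∧
      (∀ i, i < j → Q i - (P' j - Q j) ≤ P' i ∧ P' i ≤ Q i) ∧
      (∀ i, j < i → P' i ≤ Q i) ∧ Sfun Q P' ≤ Sfun Q P := by
  obtain ⟨k, hk, hmax⟩ := Finset.exists_max_image (univ.filter (fun i : Fin K => i < j))
    (fun i => Q i - P i) ⟨⟨0, by omega⟩, Finset.mem_filter.2 ⟨Finset.mem_univ _, Fin.lt_def.2 hj⟩⟩
  have hkj : k < j := by simpa using hk
  have hmax' : ∀ i, i < j → Q i - P i ≤ Q k - P k := fun i hi => hmax i (by simpa using hi)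
  by_cases hc : Q k - P k ≤ P j - Q j
  · exact ⟨P, hP, hPj, fun i hi => ⟨by linarith [hmax' i hi], hPi i hi.ne⟩,
      fun i hi => hPi i hi.ne', le_rfl⟩
  push Not at hc
  obtain ⟨P', hP'⟩ : ∃ P' : Fin K → ℝ, P' = Function.update
      (Function.update P k (Q k - (P j - Q j))) j (Q j + (Q k - P k)) := ⟨_, rfl⟩
  have hPj' : P' j = Q j + (Q k - P k) := by simp [hP']
  have hPk' : P' k = Q k - (P j - Q j) := by simp [hP', hkj.ne]
  have hPo' : ∀ i, i ≠ j → i ≠ k → P' i = P i := fun i h1 h2 => by simp [hP', h1, h2]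
  have hg : ∀ i, i ≠ j → P j - P i ≤ P' j - P' i := by
    intro i hi
    rcases eq_or_ne i k with rfl | hik
    · rw [hPj', hPk']
      linarith
    · rw [hPj', hPo' i hi hik]
      linarith
  have hu : uniqueMax P' j := by
    rw [uniqueMax_iff]
    intro i hi
    linarith [hg i hi, (uniqueMax_iff P j).1 hP i hi]
  have hle : ∀ i, i ≠ j → P' i ≤ Q i := by
    intro i hi
    rcases eq_or_ne i k with rfl | hik
    · rw [hPk']
      linarith
    · rw [hPo' i hi hik]
      exact hPi i hi
  refine ⟨P', hu, by rw [hPj']; linarith, fun i hi => ⟨?_, hle i hi.ne⟩,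
    fun i hi => hle i hi.ne', ?_⟩
  · rcases eq_or_ne i k with rfl | hik
    · rw [hPj', hPk']
      linarith
    · rw [hPj', hPo' i hi.ne hik]
      linarith [hmax' i hi]
  · have hDk := Dfun_pos hK hjm k
    refine mul_le_mul (H1_le hP hu hg) ?_
      (Finset.sum_nonneg fun i _ => div_nonneg (sq_nonneg _) (Dfun_pos hK hjm i).le) (H1_nonneg P)
    have hsplit : ∀ f : Fin K → ℝ, ∑ i, f i = ∑ i ∈ (univ.erase j).erase k, f i + f k + f j := by
      intro f
      rw [Finset.sum_erase_add _ _ (Finset.mem_erase.2 ⟨hkj.ne, Finset.mem_univ k⟩),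
        Finset.sum_erase_add _ _ (Finset.mem_univ j)]
    rw [hsplit, hsplit (fun i => (Q i - P i) ^ 2 / Dfun Q i)]
    have hrest : ∑ i ∈ (univ.erase j).erase k, (Q i - P' i) ^ 2 / Dfun Q i =
        ∑ i ∈ (univ.erase j).erase k, (Q i - P i) ^ 2 / Dfun Q i := by
      refine Finset.sum_congr rfl fun i hi => ?_
      simp only [Finset.mem_erase, Finset.mem_univ, and_true] at hi
      rw [hPo' i hi.2 hi.1]
    have hinv : (Dfun Q j)⁻¹ ≤ (Dfun Q k)⁻¹ :=
      inv_anti₀ hDk (Dfun_le hK hjm (hanti k j hkj.le))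
    have hsq : (P j - Q j) ^ 2 ≤ (Q k - P k) ^ 2 :=
      pow_le_pow_left₀ (by linarith) hc.le 2
    rw [hrest, hPj', hPk']
    simp only [div_eq_mul_inv]
    nlinarith [mul_nonneg (sub_nonneg.2 hsq) (sub_nonneg.2 hinv)]

/-- Claim G.3. -/
theorem claim_G3 (K : ℕ) (hK : 2 ≤ K) (Q : Fin K → ℝ)
    (hanti : ∀ i j : Fin K, i ≤ j → Q j ≤ Q i)
    (hstrict : Q ⟨1, by omega⟩ < Q ⟨0, by omega⟩)
    (j : Fin K) (hj : 0 < j.val) :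
    sInf {x : ℝ | ∃ P : Fin K → ℝ, uniqueMax P j ∧ Q j ≤ P j ∧
        (∀ i, i ≠ j → P i ≤ Q i) ∧ x = Sfun Q P} =
      sInf {x : ℝ | ∃ P : Fin K → ℝ, uniqueMax P j ∧ Q j ≤ P j ∧
          (∀ i, i < j → Q i - (P j - Q j) ≤ P i ∧ P i ≤ Q i) ∧
          (∀ i, j < i → P i ≤ Q i) ∧ x = Sfun Q P} := by
  have hjm : ¬ isMax Q j := by
    intro h
    have h1 := hanti ⟨1, by omega⟩ j (Fin.le_def.2 hj)
    have h2 := h ⟨0, by omega⟩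
    linarith
  refine csInf_eq_csInf_of_forall_exists_le ?_ ?_
  · rintro x ⟨P, hP, hPj, hPi, rfl⟩
    obtain ⟨P', h1, h2, h3, h4, h5⟩ := exists_better hK hanti hj hjm hP hPj hPi
    exact ⟨_, ⟨P', h1, h2, h3, h4, rfl⟩, h5⟩
  · rintro x ⟨P, hP, hPj, h3, h4, rfl⟩
    refine ⟨_, ⟨P, hP, hPj, fun i hi => ?_, rfl⟩, le_rfl⟩
    rcases lt_or_gt_of_ne hi with h | h
    · exact (h3 i h).2
    · exact h4 i h
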